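/- arXiv:2504.00398 — 2 statements merged into one kernel-verified Lean document; each statement's English description precedes it below -/
import Mathlib

section
/- Let Â = â⊗b̂⊗ĉ with ‖â‖ = ‖b̂‖ = 1. For k ∈ [n3] and 1 ≤ s < t ≤ m_k define ẑ_{s,t,k} ∈ ℝ^{n1+n2} by ẑ_{s,t,k} = √2·ĉ_k·( â_{i_s} b̂_{j_s} b̂_{j_t} e_{i_t} − â_{i_t} b̂_{j_t} b̂_{j_s} e_{i_s} ; â_{i_s} b̂_{j_s} â_{i_t} e_{j_t} − â_{i_t} b̂_{j_t} â_{i_s} e_{j_s} ), where (i_s,j_s),(i_t,j_t) are the enumerated elements of Ω_k. Let Z be the matrix whose rows are all vectors ẑ_{s,t,k}ᵀ together with the two rows (âᵀ, 0) and (0, b̂ᵀ). Assume (i) rank Z = n1 + n2, and (ii) the only pairs (a,b) with ‖a‖ = ‖b‖ = 1 satisfying Â_{i_s j_s k} a_{i_t} b_{j_t} − Â_{i_t j_t k} a_{i_s} b_{j_s} = 0 for all k ∈ [n3] and all 1 ≤ s < t ≤ m_k are the four pairs (±â, ±b̂). Then there exist constants C1 > 0 and ε > 0 such that for every tensor A ∈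 ℝ^{n1×n2×n3} with ‖A − Â‖_Ω ≤ ε and every global minimizer (a*, b*) of f_A over {(a,b) : ‖a‖ = ‖b‖ = 1}, there is θ ∈ {1, −1} with ‖a*⊗b* − θ·(â⊗b̂)‖ ≤ C1·‖A − Â‖_Ω. -/
open Finset Matrix

noncomputable section

/-- The biquadratic objective `f_A(a,b)` of the rank-1 completion problem. -/
def fA {n1 n2 n3 : ℕ} (m : Fin n3 → ℕ)
    (I : (k : Fin n3) → Fin (m k) → Fin n1) (J : (k : Fin n3) → Fin (m k) → Fin n2)
    (A : Fin n1 → Fin n2 → Fin n3 → ℝ) (a : Fin n1 → ℝ) (b : Fin n2 → ℝ) : ℝ :=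
  ∑ k : Fin n3, ∑ s : Fin (m k), ∑ t : Fin (m k),
    if s < t then
      (A (I k s) (J k s) k * a (I k t) * b (J k t)
        - A (I k t) (J k t) k * a (I k s) * b (J k s)) ^ 2
    else 0

/-- `‖D‖_Ω`, the norm over the observed index set `Ω` (given by its slice enumerations). -/
def normOmega {n1 n2 n3 : ℕ} (m : Fin n3 → ℕ)
    (I : (k : Fin n3) → Fin (m k) → Fin n1) (J : (k : Fin n3) → Fin (m k) → Fin n2)
    (D : Fin n1 → Fin n2 → Fin n3 → ℝ) : ℝ :=
  Real.sqrt (∑ k : Fin n3, ∑ s : Fin (m k), (D (I k s) (J k s) k) ^ 2)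

/-!
The objective is `f_A(a, b) = ‖L_A(a, b)‖²`, where the bilinear map `L_A` collects the `2 × 2`
minors and depends linearly on `A`. Comparing a minimizer `(a, b)` of `f_A` with the zero `(â, b̂)`
of `L_Â` gives `‖L_Â(a, b)‖ ≤ ‖L_{A - Â}(a, b)‖ + ‖L_{A - Â}(â, b̂)‖ = O(‖A - Â‖_Ω)`, so it is
enough to bound the distance from `a ⊗ b` to `±â ⊗ b̂` linearly by `‖L_Â(a, b)‖` on the product of
spheres. Near the four zeros `(±â, ±b̂)` this holds because the rank condition makes the derivative
of `L_Â` injective on the tangent space of the spheres; away from them `‖L_Â‖` is bounded below, by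
compactness.
-/

open Filter Asymptotics Topology Metric
open scoped RealInnerProductSpace

section Asymptotics

variable {X V W : Type*} [TopologicalSpace X] [SeminormedAddCommGroup V]

lemma isBigO_principal_of_forall_isBigO_nhdsWithin [SeminormedAddCommGroup W] {S : Set X}
    (hS : IsCompact S) {f : X → V} {g : X → W} (h : ∀ x ∈ S, f =O[𝓝[S] x] g) : f =O[𝓟 S] g := by
  refine hS.induction_on (p := fun U => f =O[𝓟 U] g) (by simp)
    (fun U U' hU hU' => hU'.mono (principal_mono.2 hU))
    (fun U U' hU hU' => by simpa only [sup_principal] using hU.sup hU') fun x hx => ?_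
  obtain ⟨c, hc⟩ := (h x hx).bound
  exact ⟨_, hc, isBigO_principal.2 ⟨c, fun y hy => hy⟩⟩

lemma isBigO_principal_of_isBigO_nhdsWithin_zeros [NormedAddCommGroup W] {S : Set X}
    (hS : IsCompact S) {f : X → V} {g : X → W} (hf : ContinuousOn f S) (hg : ContinuousOn g S)
    (hzero : ∀ x ∈ S, g x = 0 → f =O[𝓝[S] x] g) : f =O[𝓟 S] g := by
  refine isBigO_principal_of_forall_isBigO_nhdsWithin hS fun x hx => ?_
  by_cases hgx : g x = 0
  · exact hzero x hx hgx
  · have one_isBigO : (fun _ => (1 : ℝ)) =O[𝓝[S] x] g := by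
      refine (isBigO_const_left_iff_pos_le_norm one_ne_zero).2 ⟨‖g x‖ / 2, by positivity, ?_⟩
      exact (hg.norm x hx).eventually (eventually_ge_nhds (half_lt_self (norm_pos_iff.2 hgx)))
    exact ((hf x hx).isBigO_one ℝ).trans one_isBigO

end Asymptotics

section ErrorBound

variable {E F G H : Type*} [NormedAddCommGroup E] [InnerProductSpace ℝ E]
  [NormedAddCommGroup F] [InnerProductSpace ℝ F]
  [NormedAddCommGroup G] [NormedSpace ℝ G] [NormedAddCommGroup H] [NormedSpace ℝ H]

/-- A zero `(a, b)` of a bilinear map `B` that is nondegenerate on the product of the spheres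
through `a` and `b`: the derivative `(u, v) ↦ B a v + B u b` of `B` at `(a, b)` is injective on
the tangent space `{(u, v) | u ⟂ a, v ⟂ b}`. -/
structure IsNondegenerateZero (B : E →L[ℝ] F →L[ℝ] G) (a : E) (b : F) : Prop where
  map_eq_zero : B a b = 0
  eq_zero_of_tangent : ∀ u v, ⟪a, u⟫ = 0 → ⟪b, v⟫ = 0 → B a v + B u b = 0 → u = 0 ∧ v = 0

namespace IsNondegenerateZero

variable {B : E →L[ℝ] F →L[ℝ] G} {a : E} {b : F}

lemma neg_left (h : IsNondegenerateZero B a b) : IsNondegenerateZero B (-a) b where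
  map_eq_zero := by simp [h.map_eq_zero]
  eq_zero_of_tangent u v hu hv huv := by
    simpa using h.eq_zero_of_tangent u (-v) (by simpa using hu) (by simpa using hv)
      (by simpa using huv)

lemma neg_right (h : IsNondegenerateZero B a b) : IsNondegenerateZero B a (-b) where
  map_eq_zero := by simp [h.map_eq_zero]
  eq_zero_of_tangent u v hu hv huv := by
    simpa using h.eq_zero_of_tangent (-u) v (by simpa using hu) (by simpa using hv)
      (by simpa using huv)

lemma of_eq_or_eq_neg (h : IsNondegenerateZero B a b) {a' : E} {b' : F}
    (ha : a' = a ∨ a' = -a) (hb : b' = b ∨ b' = -b) : IsNondegenerateZero B a' b' := by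
  rcases ha with rfl | rfl <;> rcases hb with rfl | rfl
  exacts [h, h.neg_right, h.neg_left, h.neg_left.neg_right]

variable [FiniteDimensional ℝ E] [FiniteDimensional ℝ F]

-- On the product of spheres, `p ↦ (B p.1 p.2, ‖p.1‖², ‖p.2‖²)` varies only through `B`, and its
-- derivative at a nondegenerate zero is injective on the whole of `E × F`.
lemma isBigO_sub (h : IsNondegenerateZero B a b) :
    (fun p => p - (a, b)) =O[𝓝[sphere 0 ‖a‖ ×ˢ sphere 0 ‖b‖] (a, b)] fun p => B p.1 p.2 := by
  have hderiv := ((B.isBoundedBilinearMap.hasFDerivAt (a, b)).prodMk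
    ((hasFDerivAt_fst.norm_sq).prodMk (hasFDerivAt_snd.norm_sq))).hasFDerivWithinAt
      (s := sphere 0 ‖a‖ ×ˢ sphere 0 ‖b‖)
  refine (hderiv.isTheta_sub ?_).isBigO_symm.trans (IsBigO.of_bound' ?_)
  · refine (LinearMap.isClosedEmbedding_of_injective (LinearMap.ker_eq_bot'.2 ?_)).isInducing
    rintro ⟨u, v⟩ huv
    obtain ⟨hB, hu, hv⟩ : B a v + B u b = 0 ∧ ⟪a, u⟫ = 0 ∧ ⟪b, v⟫ = 0 := by simpa using huv
    simpa using h.eq_zero_of_tangent u v hu hv hB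
  · filter_upwards [self_mem_nhdsWithin] with p hp
    have hp1 : ‖p.1‖ = ‖a‖ := by simpa using hp.1
    have hp2 : ‖p.2‖ = ‖b‖ := by simpa using hp.2
    simp [hp1, hp2, h.map_eq_zero]

end IsNondegenerateZero

theorem isBigO_min_norm_sub_norm_add [FiniteDimensional ℝ E] [FiniteDimensional ℝ F]
    {B : E →L[ℝ] F →L[ℝ] G} {a : E} {b : F} (h : IsNondegenerateZero B a b)
    (hzeros : ∀ a' b', ‖a'‖ = ‖a‖ → ‖b'‖ = ‖b‖ → B a' b' = 0 →
      (a' = a ∨ a' = -a) ∧ (b' = b ∨ b' = -b))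
    (T : E →L[ℝ] F →L[ℝ] H) :
    (fun p : E × F => min ‖T p.1 p.2 - T a b‖ ‖T p.1 p.2 + T a b‖)
      =O[𝓟 (sphere 0 ‖a‖ ×ˢ sphere 0 ‖b‖)] fun p => B p.1 p.2 := by
  refine isBigO_principal_of_isBigO_nhdsWithin_zeros
    ((isCompact_sphere _ _).prod (isCompact_sphere _ _)) (by fun_prop) (by fun_prop) ?_
  rintro ⟨a', b'⟩ ⟨ha', hb'⟩ hab
  rw [mem_sphere_zero_iff_norm] at ha' hb'
  obtain ⟨haa', hbb'⟩ := hzeros a' b' ha' hb' hab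
  have hT' : T a' b' = T a b ∨ T a' b' = -T a b := by
    rcases haa' with rfl | rfl <;> rcases hbb' with rfl | rfl <;> simp
  have hmin : ∀ p : E × F,
      ‖min ‖T p.1 p.2 - T a b‖ ‖T p.1 p.2 + T a b‖‖ ≤ ‖T p.1 p.2 - T a' b'‖ := by
    intro p
    rw [Real.norm_of_nonneg (by positivity)]
    rcases hT' with hT' | hT' <;> simp [hT']
  have hTlip : (fun p : E × F => T p.1 p.2 - T a' b')
      =O[𝓝[sphere 0 ‖a'‖ ×ˢ sphere 0 ‖b'‖] (a', b')] fun p => p - (a', b') :=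
    (T.isBoundedBilinearMap.hasFDerivAt (a', b')).hasFDerivWithinAt.isBigO_sub
  rw [← ha', ← hb']
  exact (IsBigO.of_bound' (.of_forall hmin)).trans
    (hTlip.trans (h.of_eq_or_eq_neg haa' hbb').isBigO_sub)

end ErrorBound

lemma mulVec_injective_of_rank_eq_card {ι κ K : Type*} [Fintype κ] [Field K]
    {Z : Matrix ι κ K} (h : Z.rank = Fintype.card κ) : Function.Injective Z.mulVec := by
  rw [mulVec_injective_iff, linearIndependent_iff_card_eq_finrank_span, ← h,
    rank_eq_finrank_span_cols, Set.finrank]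

/-- The bilinear map `(a, b) ↦ a ⊗ b`, with values in the `n1 × n2` matrices under the Frobenius
norm, encoded as a Euclidean space. -/
def outerProduct (n1 n2 : ℕ) : EuclideanSpace ℝ (Fin n1) →L[ℝ] EuclideanSpace ℝ (Fin n2) →L[ℝ]
    EuclideanSpace ℝ (Fin n1 × Fin n2) :=
  (LinearMap.mk₂ ℝ (fun a b => WithLp.toLp 2 fun p : Fin n1 × Fin n2 => a p.1 * b p.2)
    (fun _ _ _ => by ext; simp [add_mul]) (fun _ _ _ => by ext; simp [mul_assoc])
    (fun _ _ _ => by ext; simp [mul_add])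
    (fun _ _ _ => by ext; simp [mul_left_comm])).toContinuousBilinearMap

@[simp]
lemma outerProduct_apply {n1 n2 : ℕ} (a : EuclideanSpace ℝ (Fin n1))
    (b : EuclideanSpace ℝ (Fin n2)) (p : Fin n1 × Fin n2) :
    outerProduct n1 n2 a b p = a p.1 * b p.2 := rfl

lemma norm_outerProduct_sub_smul {n1 n2 : ℕ} (a a' : EuclideanSpace ℝ (Fin n1))
    (b b' : EuclideanSpace ℝ (Fin n2)) (θ : ℝ) :
    ‖outerProduct n1 n2 a b - θ • outerProduct n1 n2 a' b'‖ =
      √(∑ i, ∑ j, (a i * b j - θ * (a' i * b' j)) ^ 2) := by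
  simp [EuclideanSpace.norm_eq, Fintype.sum_prod_type]

section Completion

variable {n1 n2 n3 : ℕ} (m : Fin n3 → ℕ)
  (I : (k : Fin n3) → Fin (m k) → Fin n1) (J : (k : Fin n3) → Fin (m k) → Fin n2)
  (A : Fin n1 → Fin n2 → Fin n3 → ℝ)

/-- The index set of `minorMap`: triples `(k, s, t)` with `s < t`, standing for two distinct
observed entries of the `k`-th slice. -/
abbrev EntryPair {n3 : ℕ} (m : Fin n3 → ℕ) : Type :=
  Σ k : Fin n3, {p : Fin (m k) × Fin (m k) // p.1 < p.2}

/-- The bilinear map sending `(a, b)` to the family of `2 × 2` minors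
`A_{i_s j_s k} a_{i_t} b_{j_t} - A_{i_t j_t k} a_{i_s} b_{j_s}`; its squared Euclidean norm is the
objective `f_A(a, b)`. -/
def minorMap : EuclideanSpace ℝ (Fin n1) →L[ℝ] EuclideanSpace ℝ (Fin n2) →L[ℝ]
    EuclideanSpace ℝ (EntryPair m) :=
  (LinearMap.mk₂ ℝ
    (fun a b => WithLp.toLp 2 fun q : EntryPair m =>
      A (I q.1 q.2.1.1) (J q.1 q.2.1.1) q.1 * a (I q.1 q.2.1.2) * b (J q.1 q.2.1.2)
        - A (I q.1 q.2.1.2) (J q.1 q.2.1.2) q.1 * a (I q.1 q.2.1.1) * b (J q.1 q.2.1.1))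
    (fun _ _ _ => by ext; simp only [PiLp.add_apply]; ring)
    (fun _ _ _ => by ext; simp only [PiLp.smul_apply, smul_eq_mul]; ring)
    (fun _ _ _ => by ext; simp only [PiLp.add_apply]; ring)
    (fun _ _ _ => by ext; simp only [PiLp.smul_apply, smul_eq_mul]; ring)).toContinuousBilinearMap

lemma minorMap_apply (a : EuclideanSpace ℝ (Fin n1)) (b : EuclideanSpace ℝ (Fin n2))
    (q : EntryPair m) :
    minorMap m I J A a b q =
      A (I q.1 q.2.1.1) (J q.1 q.2.1.1) q.1 * a (I q.1 q.2.1.2) * b (J q.1 q.2.1.2)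
        - A (I q.1 q.2.1.2) (J q.1 q.2.1.2) q.1 * a (I q.1 q.2.1.1) * b (J q.1 q.2.1.1) := rfl

lemma minorMap_sub (A' : Fin n1 → Fin n2 → Fin n3 → ℝ) :
    minorMap m I J (A - A') = minorMap m I J A - minorMap m I J A' := by
  ext a b q
  simp only [_root_.sub_apply, PiLp.sub_apply, Pi.sub_apply, minorMap_apply]
  ring

lemma norm_minorMap_sq (a : EuclideanSpace ℝ (Fin n1)) (b : EuclideanSpace ℝ (Fin n2)) :
    ‖minorMap m I J A a b‖ ^ 2 = fA m I J A a b := by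
  rw [EuclideanSpace.real_norm_sq_eq, Fintype.sum_sigma, fA]
  refine sum_congr rfl fun k _ => ?_
  rw [← Fintype.sum_prod_type', ← sum_filter]
  exact (sum_subtype {p : Fin (m k) × Fin (m k) | p.1 < p.2} (fun _ => mem_filter_univ _)
    fun p => (A (I k p.1) (J k p.1) k * a (I k p.2) * b (J k p.2)
      - A (I k p.2) (J k p.2) k * a (I k p.1) * b (J k p.1)) ^ 2).symm

lemma sum_mul_sq_le_normOmega_sq :
    ∑ k, (m k : ℝ) * ∑ s, A (I k s) (J k s) k ^ 2 ≤ (∑ k, m k : ℕ) * normOmega m I J A ^ 2 := by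
  rw [normOmega, Real.sq_sqrt (by positivity), mul_sum]
  gcongr with k
  exact single_le_sum (f := m) (fun _ _ => Nat.zero_le _) (mem_univ k)

lemma fA_le_normOmega_sq (a : EuclideanSpace ℝ (Fin n1)) (b : EuclideanSpace ℝ (Fin n2)) :
    fA m I J A a b ≤ 4 * (‖a‖ * ‖b‖) ^ 2 * ((∑ k, m k : ℕ) * normOmega m I J A ^ 2) := by
  have entry_sq_le (i : Fin n1) (j : Fin n2) : (a i * b j) ^ 2 ≤ (‖a‖ * ‖b‖) ^ 2 := by
    rw [sq_le_sq, abs_mul, abs_of_nonneg (by positivity : 0 ≤ ‖a‖ * ‖b‖)]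
    gcongr
    exacts [PiLp.norm_apply_le a i, PiLp.norm_apply_le b j]
  calc fA m I J A a b
      ≤ ∑ k, ∑ s, ∑ t : Fin (m k),
          2 * (‖a‖ * ‖b‖) ^ 2 * (A (I k s) (J k s) k ^ 2 + A (I k t) (J k t) k ^ 2) := by
        unfold fA
        gcongr with k _ s _ t
        split_ifs
        · calc _ ≤ 2 * ((A (I k s) (J k s) k) ^ 2 * (a (I k t) * b (J k t)) ^ 2
                  + (A (I k t) (J k t) k) ^ 2 * (a (I k s) * b (J k s)) ^ 2) := by
                linarith [sq_nonneg (A (I k s) (J k s) k * (a (I k t) * b (J k t))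
                  + A (I k t) (J k t) k * (a (I k s) * b (J k s)))]
            _ ≤ 2 * ((A (I k s) (J k s) k) ^ 2 * (‖a‖ * ‖b‖) ^ 2
                  + (A (I k t) (J k t) k) ^ 2 * (‖a‖ * ‖b‖) ^ 2) := by
                gcongr 2 * (_ * ?_ + _ * ?_)
                exacts [entry_sq_le _ _, entry_sq_le _ _]
            _ = _ := by ring
        · positivity
    _ = 4 * (‖a‖ * ‖b‖) ^ 2 * ∑ k, (m k : ℝ) * ∑ s, A (I k s) (J k s) k ^ 2 := by
        simp only [← mul_sum, sum_add_distrib, sum_const, card_univ, Fintype.card_fin, nsmul_eq_mul]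
        ring
    _ ≤ _ := by
        gcongr
        exact sum_mul_sq_le_normOmega_sq m I J A

lemma normOmega_nonneg : 0 ≤ normOmega m I J A := Real.sqrt_nonneg _

lemma norm_minorMap_le (a : EuclideanSpace ℝ (Fin n1)) (b : EuclideanSpace ℝ (Fin n2)) :
    ‖minorMap m I J A a b‖ ≤ 2 * √(∑ k, m k : ℕ) * normOmega m I J A * (‖a‖ * ‖b‖) := by
  have hΩ := normOmega_nonneg m I J A
  refine le_of_sq_le_sq ?_ (by positivity)
  rw [norm_minorMap_sq]
  refine (fA_le_normOmega_sq m I J A a b).trans_eq ?_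
  simp only [mul_pow]
  rw [Real.sq_sqrt (by positivity)]
  ring

lemma minorMap_eq_zero_of_rank_one {a : EuclideanSpace ℝ (Fin n1)} {b : EuclideanSpace ℝ (Fin n2)}
    {c : Fin n3 → ℝ} (hA : ∀ i j k, A i j k = a i * b j * c k) : minorMap m I J A a b = 0 := by
  ext q
  simp only [minorMap_apply, hA, PiLp.zero_apply]
  ring

variable {m I J A} in
lemma norm_minorMap_le_of_fA_le {A' : Fin n1 → Fin n2 → Fin n3 → ℝ}
    {a a' : EuclideanSpace ℝ (Fin n1)} {b b' : EuclideanSpace ℝ (Fin n2)}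
    (ha : ‖a‖ = 1) (hb : ‖b‖ = 1) (ha' : ‖a'‖ = 1) (hb' : ‖b'‖ = 1)
    (hzero : minorMap m I J A' a' b' = 0) (hle : fA m I J A a b ≤ fA m I J A a' b') :
    ‖minorMap m I J A' a b‖ ≤ 4 * √(∑ k, m k : ℕ) * normOmega m I J (A - A') := by
  rw [← norm_minorMap_sq, ← norm_minorMap_sq, sq_le_sq₀ (norm_nonneg _) (norm_nonneg _)] at hle
  have hab := norm_minorMap_le m I J (A - A') a b
  have hab' := norm_minorMap_le m I J (A - A') a' b'
  simp only [ha, hb, ha', hb', minorMap_sub, _root_.sub_apply, hzero, sub_zero, mul_one] at hab hab'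
  have := norm_le_norm_add_norm_sub (minorMap m I J A a b) (minorMap m I J A' a b)
  linarith

/-- The matrix `Z` of the paper for the rank-one tensor `a ⊗ b ⊗ c`: up to the factor `√2`, the
first rows are the derivative of `minorMap` at `(a, b)`, and the last two are the differentials of
the constraints `‖a‖² / 2` and `‖b‖² / 2`. -/
def linearizationMatrix (a : EuclideanSpace ℝ (Fin n1)) (b : EuclideanSpace ℝ (Fin n2))
    (c : Fin n3 → ℝ) : Matrix (EntryPair m ⊕ Fin 2) (Fin n1 ⊕ Fin n2) ℝ :=
  Matrix.of (Sum.elim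
    (fun q x => √2 * c q.1 *
      (Sum.elim
        (fun i => a (I q.1 q.2.1.1) * b (J q.1 q.2.1.1) * b (J q.1 q.2.1.2) *
              (if i = I q.1 q.2.1.2 then 1 else 0)
          - a (I q.1 q.2.1.2) * b (J q.1 q.2.1.2) * b (J q.1 q.2.1.1) *
              (if i = I q.1 q.2.1.1 then 1 else 0))
        (fun j => a (I q.1 q.2.1.1) * b (J q.1 q.2.1.1) * a (I q.1 q.2.1.2) *
              (if j = J q.1 q.2.1.2 then 1 else 0)
          - a (I q.1 q.2.1.2) * b (J q.1 q.2.1.2) * a (I q.1 q.2.1.1) *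
              (if j = J q.1 q.2.1.1 then 1 else 0)) x))
    ![Sum.elim (fun i => a i) (fun _ => 0), Sum.elim (fun _ => 0) (fun j => b j)])

section Linearization

variable (a u : EuclideanSpace ℝ (Fin n1)) (b v : EuclideanSpace ℝ (Fin n2)) (c : Fin n3 → ℝ)

variable {A} in
lemma linearizationMatrix_mulVec_inl (hA : ∀ i j k, A i j k = a i * b j * c k) (q : EntryPair m) :
    (linearizationMatrix m I J a b c *ᵥ Sum.elim u v) (Sum.inl q) =
      √2 * (minorMap m I J A a v + minorMap m I J A u b) q := by
  simp only [linearizationMatrix, Matrix.mulVec, dotProduct, Fintype.sum_sum_type, Matrix.of_apply,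
    Sum.elim_inl, Sum.elim_inr, mul_sub, sub_mul, sum_sub_distrib, mul_ite, ite_mul, mul_one,
    mul_zero, zero_mul, sum_ite_eq', mem_univ, if_true, PiLp.add_apply, minorMap_apply, hA]
  ring

lemma linearizationMatrix_mulVec_inr_zero :
    (linearizationMatrix m I J a b c *ᵥ Sum.elim u v) (Sum.inr 0) = ⟪a, u⟫ := by
  simp [linearizationMatrix, Matrix.mulVec, dotProduct, PiLp.inner_apply, mul_comm]

lemma linearizationMatrix_mulVec_inr_one :
    (linearizationMatrix m I J a b c *ᵥ Sum.elim u v) (Sum.inr 1) = ⟪b, v⟫ := by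
  simp [linearizationMatrix, Matrix.mulVec, dotProduct, PiLp.inner_apply, mul_comm]

end Linearization

variable {m I J A} in
lemma isNondegenerateZero_minorMap_of_rank {a : EuclideanSpace ℝ (Fin n1)}
    {b : EuclideanSpace ℝ (Fin n2)} {c : Fin n3 → ℝ} (hA : ∀ i j k, A i j k = a i * b j * c k)
    (hrank : (linearizationMatrix m I J a b c).rank = n1 + n2) :
    IsNondegenerateZero (minorMap m I J A) a b where
  map_eq_zero := minorMap_eq_zero_of_rank_one m I J A hA
  eq_zero_of_tangent u v hu hv huv := by
    have hZ : linearizationMatrix m I J a b c *ᵥ Sum.elim u v = 0 := by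
      ext (q | r)
      · simp [linearizationMatrix_mulVec_inl m I J a u b v c hA, huv]
      · fin_cases r
        · exact (linearizationMatrix_mulVec_inr_zero m I J a u b v c).trans hu
        · exact (linearizationMatrix_mulVec_inr_one m I J a u b v c).trans hv
    have huv0 := mulVec_injective_of_rank_eq_card (by simpa using hrank)
      (hZ.trans (mulVec_zero _).symm)
    exact ⟨by ext i; exact congrFun huv0 (Sum.inl i), by ext j; exact congrFun huv0 (Sum.inr j)⟩

end Completion

theorem stmt0_general {n1 n2 n3 : ℕ} (m : Fin n3 → ℕ)
    (I : (k : Fin n3) → Fin (m k) → Fin n1) (J : (k : Fin n3) → Fin (m k) → Fin n2)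
    {ahat : EuclideanSpace ℝ (Fin n1)} {bhat : EuclideanSpace ℝ (Fin n2)}
    (hna : ‖ahat‖ = 1) (hnb : ‖bhat‖ = 1) {Ahat : Fin n1 → Fin n2 → Fin n3 → ℝ}
    (hnondeg : IsNondegenerateZero (minorMap m I J Ahat) ahat bhat)
    (hzeros : ∀ a b, ‖a‖ = 1 → ‖b‖ = 1 → minorMap m I J Ahat a b = 0 →
      (a = ahat ∨ a = -ahat) ∧ (b = bhat ∨ b = -bhat)) :
    ∃ C : ℝ, 0 < C ∧ ∀ (A : Fin n1 → Fin n2 → Fin n3 → ℝ)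
      (a : EuclideanSpace ℝ (Fin n1)) (b : EuclideanSpace ℝ (Fin n2)), ‖a‖ = 1 → ‖b‖ = 1 →
      fA m I J A a b ≤ fA m I J A ahat bhat →
        ∃ θ : ℝ, (θ = 1 ∨ θ = -1) ∧
          √(∑ i, ∑ j, (a i * b j - θ * (ahat i * bhat j)) ^ 2)
            ≤ C * normOmega m I J (A - Ahat) := by
  obtain ⟨c, hc, hbound⟩ := (isBigO_min_norm_sub_norm_add hnondeg (by rwa [hna, hnb])
    (outerProduct n1 n2)).exists_pos
  rw [isBigOWith_principal] at hbound
  refine ⟨c * (4 * √(∑ k, m k : ℕ)) + 1, by positivity, fun A a b ha hb hle => ?_⟩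
  have hmin : min ‖outerProduct n1 n2 a b - outerProduct n1 n2 ahat bhat‖
      ‖outerProduct n1 n2 a b + outerProduct n1 n2 ahat bhat‖
        ≤ (c * (4 * √(∑ k, m k : ℕ)) + 1) * normOmega m I J (A - Ahat) := by
    calc _ ≤ c * ‖minorMap m I J Ahat a b‖ :=
          (le_abs_self _).trans (hbound (a, b) ⟨by simp [ha, hna], by simp [hb, hnb]⟩)
      _ ≤ c * (4 * √(∑ k, m k : ℕ) * normOmega m I J (A - Ahat)) := by
          gcongr
          exact norm_minorMap_le_of_fA_le ha hb hna hnb hnondeg.map_eq_zero hle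
      _ ≤ _ := by
          linarith [normOmega_nonneg m I J (A - Ahat)]
  simp only [← norm_outerProduct_sub_smul]
  rcases min_le_iff.1 hmin with h | h
  · exact ⟨1, Or.inl rfl, by simpa using h⟩
  · exact ⟨-1, Or.inr rfl, by simpa using h⟩

theorem stmt0 {n1 n2 n3 : ℕ} (hn1 : 0 < n1) (hn2 : 0 < n2) (hn3 : 0 < n3)
    (m : Fin n3 → ℕ)
    (I : (k : Fin n3) → Fin (m k) → Fin n1) (J : (k : Fin n3) → Fin (m k) → Fin n2)
    (hinj : ∀ k : Fin n3, Function.Injective (fun s => (I k s, J k s)))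
    (ahat : EuclideanSpace ℝ (Fin n1)) (bhat : EuclideanSpace ℝ (Fin n2))
    (chat : Fin n3 → ℝ)
    (hna : ‖ahat‖ = 1) (hnb : ‖bhat‖ = 1)
    (Ahat : Fin n1 → Fin n2 → Fin n3 → ℝ)
    (hAhat : ∀ i j k, Ahat i j k = ahat i * bhat j * chat k)
    (Z : Matrix ((Σ k : Fin n3, {p : Fin (m k) × Fin (m k) // p.1 < p.2}) ⊕ Fin 2)
          (Fin n1 ⊕ Fin n2) ℝ)
    (hZ : Z = Matrix.of (Sum.elim
      (fun q : Σ k : Fin n3, {p : Fin (m k) × Fin (m k) // p.1 < p.2} =>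
        fun x : Fin n1 ⊕ Fin n2 => Real.sqrt 2 * chat q.1 *
          (Sum.elim
            (fun i => ahat (I q.1 q.2.1.1) * bhat (J q.1 q.2.1.1) * bhat (J q.1 q.2.1.2) *
                  (if i = I q.1 q.2.1.2 then 1 else 0)
              - ahat (I q.1 q.2.1.2) * bhat (J q.1 q.2.1.2) * bhat (J q.1 q.2.1.1) *
                  (if i = I q.1 q.2.1.1 then 1 else 0))
            (fun j => ahat (I q.1 q.2.1.1) * bhat (J q.1 q.2.1.1) * ahat (I q.1 q.2.1.2) *
                  (if j = J q.1 q.2.1.2 then 1 else 0)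
              - ahat (I q.1 q.2.1.2) * bhat (J q.1 q.2.1.2) * ahat (I q.1 q.2.1.1) *
                  (if j = J q.1 q.2.1.1 then 1 else 0)) x))
      ![Sum.elim (fun i => ahat i) (fun _ => 0),
        Sum.elim (fun _ => 0) (fun j => bhat j)]))
    (hrank : Z.rank = n1 + n2)
    (hzeros : ∀ (a : EuclideanSpace ℝ (Fin n1)) (b : EuclideanSpace ℝ (Fin n2)),
      ‖a‖ = 1 → ‖b‖ = 1 →
      (∀ (k : Fin n3) (s t : Fin (m k)), s < t →
        Ahat (I k s) (J k s) k * a (I k t) * b (J k t)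
          - Ahat (I k t) (J k t) k * a (I k s) * b (J k s) = 0) →
      ((a = ahat ∧ b = bhat) ∨ (a = ahat ∧ b = -bhat) ∨
       (a = -ahat ∧ b = bhat) ∨ (a = -ahat ∧ b = -bhat))) :
    ∃ C1 : ℝ, 0 < C1 ∧ ∃ ε : ℝ, 0 < ε ∧
      ∀ A : Fin n1 → Fin n2 → Fin n3 → ℝ,
        normOmega m I J (A - Ahat) ≤ ε →
        ∀ (astar : EuclideanSpace ℝ (Fin n1)) (bstar : EuclideanSpace ℝ (Fin n2)),
          ‖astar‖ = 1 → ‖bstar‖ = 1 →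
          (∀ (a : EuclideanSpace ℝ (Fin n1)) (b : EuclideanSpace ℝ (Fin n2)),
            ‖a‖ = 1 → ‖b‖ = 1 →
            fA m I J A (fun i => astar i) (fun j => bstar j)
              ≤ fA m I J A (fun i => a i) (fun j => b j)) →
          ∃ θ : ℝ, (θ = 1 ∨ θ = -1) ∧
            Real.sqrt (∑ i : Fin n1, ∑ j : Fin n2,
                (astar i * bstar j - θ * (ahat i * bhat j)) ^ 2)
              ≤ C1 * normOmega m I J (A - Ahat) := by
  subst hZ
  obtain ⟨C, hC, hbound⟩ := stmt0_general m I J hna hnb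
    (isNondegenerateZero_minorMap_of_rank hAhat hrank) fun a b ha hb hab => by
      have := hzeros a b ha hb fun k s t hst => congrArg (· ⟨k, (s, t), hst⟩) hab
      tauto
  exact ⟨C, hC, 1, one_pos, fun A _ a b ha hb hmin => hbound A a b ha hb (hmin ahat bhat hna hnb)⟩
end
end

section
/- Let Â = â⊗b̂⊗ĉ with ‖â‖ = ‖b̂‖ = 1, and let Z and the assumptions (i) rank Z = n1+n2 and (ii) the four pairs (±â, ±b̂) are the only unit-norm common zeros of all the forms Â_{i_s j_s k} a_{i_t} b_{j_t} − Â_{i_t j_t k} a_{i_s} b_{j_s} be as in Theorem 3.1. Assume additionally that (â,b̂) is nonsingular, i.e., for every k ∈ [n3], m_k ≥ 1 and â_{i_s} b̂_{j_s} ≠ 0 for at least one s ∈ [m_k], and that ĉ_k ≠ 0 for every k ∈ [n3]. Then there exist constants C > 0 and ε > 0 such that for every tensor A ∈ ℝ^{n1×n2×n3} with ‖A − Â‖_Ω ≤ ε and every global minimizer (a*, b*) of f_A over {(a,b) : ‖a‖ = ‖b‖ = 1}: the pair (a*, b*) is nonsingular, and the vector c* ∈ ℝ^{n3} defined coordinatewise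 by c*_k = (Σ_{s=1}^{m_k} A_{i_s j_s k} a*_{i_s} b*_{j_s}) / (Σ_{s=1}^{m_k} (a*_{i_s} b*_{j_s})²) satisfies ‖a*⊗b*⊗c* − â⊗b̂⊗ĉ‖ ≤ C·‖A − Â‖_Ω. -/
open Finset Matrix

noncomputable section

/-- A pair `(a,b)` is nonsingular: every slice has an observed entry with `a_i b_j ≠ 0`. -/
def Nonsingular {n1 n2 n3 : ℕ} (m : Fin n3 → ℕ)
    (I : (k : Fin n3) → Fin (m k) → Fin n1) (J : (k : Fin n3) → Fin (m k) → Fin n2)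
    (a : Fin n1 → ℝ) (b : Fin n2 → ℝ) : Prop :=
  ∀ k : Fin n3, 0 < m k ∧ ∃ s : Fin (m k), a (I k s) * b (J k s) ≠ 0

/-!
The `2 × 2` minors whose squares add up to `f_A(a, b)` form a map `R_y(a, b)` that is bilinear
in `(a, b)` and linear in the vector `y` of observed entries of `A`. The rank condition on `Z`
says that the derivative of `(a, b) ↦ (R_ŷ(a, b), ‖a‖², ‖b‖²)` at `(â, b̂)` is injective, so
near `(â, b̂)` the distance from a pair of unit vectors to `(â, b̂)` is `O(‖R_ŷ(a, b)‖)`. Once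
signs are chosen so that `⟪â, a⟫, ⟪b̂, b⟫ ≥ 0`, the only zero is `(â, b̂)` and compactness makes
this bound global. A minimizer of `f_A` satisfies `‖R_y(a, b)‖ ≤ ‖R_y(â, b̂)‖`, and since
`R_ŷ(â, b̂) = 0` this forces `‖R_ŷ(a, b)‖ = O(‖y - ŷ‖)`. Finally, the least-squares
reconstruction of the tensor from `(y, a, b)` does not depend on the signs and is differentiable
at `(ŷ, â, b̂)`, so it inherits the linear bound.
-/

section ErrorBounds

open Asymptotics Filter Topology

lemma isBigO_principal_of_forall_nhdsWithin {X V W : Type*} [TopologicalSpace X] [Norm V]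
    [SeminormedAddCommGroup W] {s : Set X} (hs : IsCompact s) {f : X → V} {g : X → W}
    (h : ∀ x ∈ s, f =O[𝓝[s] x] g) : f =O[𝓟 s] g := by
  refine hs.induction_on (p := fun t => f =O[𝓟 t] g) (by simp)
    (fun _ _ hst ht => ht.mono (principal_mono.2 hst))
    (fun _ _ hs ht => by simpa only [sup_principal] using hs.sup ht) fun x hx => ?_
  obtain ⟨C, hC⟩ := (h x hx).bound
  exact ⟨_, hC, isBigO_principal.2 ⟨C, fun _ hy => hy⟩⟩

lemma isBigO_sub_principal_of_forall_eq {V W : Type*} [SeminormedAddCommGroup V]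
    [NormedAddCommGroup W] {s : Set V} (hs : IsCompact s) {g : V → W} (hg : ContinuousOn g s)
    {p : V} (hzero : ∀ q ∈ s, g q = 0 → q = p) (hloc : (fun q => q - p) =O[𝓝[s] p] g) :
    (fun q => q - p) =O[𝓟 s] g := by
  refine isBigO_principal_of_forall_nhdsWithin hs fun q hq => ?_
  by_cases hgq : g q = 0
  · exact hzero q hq hgq ▸ hloc
  · have hbounded : (fun x => x - p) =O[𝓝[s] q] fun _ => (1 : ℝ) :=
      ((continuous_id.sub continuous_const).tendsto q |>.mono_left nhdsWithin_le_nhds).isBigO_one ℝ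
    have hg_ne : ∀ᶠ x in 𝓝[s] q, ‖g q‖ / 2 ≤ ‖g x‖ :=
      (hg q hq).norm.eventually_const_le (half_lt_self (norm_pos_iff.2 hgq))
    have hone : (fun _ => (1 : ℝ)) =O[𝓝[s] q] g :=
      isBigO_const_left_iff_pos_le_norm one_ne_zero |>.2 ⟨_, half_pos (norm_pos_iff.2 hgq), hg_ne⟩
    exact hbounded.trans hone

end ErrorBounds

section Bilinear

open Asymptotics Filter Topology

variable {E F G : Type*} [NormedAddCommGroup E] [InnerProductSpace ℝ E] [NormedAddCommGroup F]
  [InnerProductSpace ℝ F] [NormedAddCommGroup G] [NormedSpace ℝ G]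

lemma exists_abs_eq_one_inner_smul_nonneg (x y : E) :
    ∃ σ : ℝ, |σ| = 1 ∧ 0 ≤ inner ℝ x (σ • y) := by
  obtain h | h := le_total 0 (inner ℝ x y)
  · exact ⟨1, by simp, by simpa using h⟩
  · exact ⟨-1, by simp, by simpa using h⟩

lemma eq_of_eq_or_eq_neg_of_inner_nonneg {x y : E} (h : y = x ∨ y = -x)
    (hxy : 0 ≤ inner ℝ x y) : y = x := by
  rcases h with rfl | rfl
  · rfl
  · have hx : x = 0 := by simpa using hxy
    simp [hx]

/-- The pairs of unit vectors forming nonnegative inner products with the reference pair `p`: up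
to sign changes of either component, these are all pairs of unit vectors. -/
def alignedUnitPairs (p : E × F) : Set (E × F) :=
  {q | (‖q.1‖ = 1 ∧ ‖q.2‖ = 1) ∧ 0 ≤ inner ℝ p.1 q.1 ∧ 0 ≤ inner ℝ p.2 q.2}

lemma isCompact_alignedUnitPairs [FiniteDimensional ℝ E] [FiniteDimensional ℝ F] (p : E × F) :
    IsCompact (alignedUnitPairs p) := by
  have hspheres : IsCompact {q : E × F | ‖q.1‖ = 1 ∧ ‖q.2‖ = 1} := by
    convert (isCompact_sphere (0 : E) 1).prod (isCompact_sphere (0 : F) 1) using 1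
    ext q
    simp
  have hclosed : IsClosed {q : E × F | 0 ≤ inner ℝ p.1 q.1 ∧ 0 ≤ inner ℝ p.2 q.2} :=
    (isClosed_le continuous_const (continuous_const.inner continuous_fst)).and
      (isClosed_le continuous_const (continuous_const.inner continuous_snd))
  exact hspheres.inter_right hclosed

lemma isBigO_sub_of_injective_linearization [FiniteDimensional ℝ E] [FiniteDimensional ℝ F]
    (B : E →L[ℝ] F →L[ℝ] G) {p : E × F} (hp : B p.1 p.2 = 0)
    (hinj : ∀ h k, B p.1 k + B h p.2 = 0 → inner ℝ p.1 h = 0 → inner ℝ p.2 k = 0 →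
      h = 0 ∧ k = 0) :
    (fun q => q - p) =O[𝓝[{q | ‖q.1‖ = ‖p.1‖ ∧ ‖q.2‖ = ‖p.2‖}] p] fun q => B q.1 q.2 := by
  -- Adjoining the norms makes the derivative injective on all of `E × F`.
  let Ψ : E × F → G × ℝ × ℝ := fun q => (B q.1 q.2, ‖q.1‖ ^ 2, ‖q.2‖ ^ 2)
  have hΨ := (B.isBoundedBilinearMap.hasFDerivAt p).prodMk
    ((hasFDerivAt_fst (p := p)).norm_sq.prodMk (hasFDerivAt_snd (p := p)).norm_sq)
  have hker : Function.Injective (fderiv ℝ Ψ p) := by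
    rw [hΨ.fderiv, injective_iff_map_eq_zero]
    rintro ⟨h, k⟩ hk
    simp only [ContinuousLinearMap.prod_apply, Prod.mk_eq_zero] at hk
    obtain ⟨hB, hh, hk⟩ := hk
    exact Prod.mk_eq_zero.2 (hinj h k hB (by simpa using hh) (by simpa using hk))
  have hΘ := HasFDerivAt.isTheta_sub (hΨ.fderiv ▸ hΨ)
    (LinearMap.isClosedEmbedding_of_injective (LinearMap.ker_eq_bot.2 hker)).isInducing
  refine (hΘ.isBigO_symm.mono nhdsWithin_le_nhds).trans (IsBigO.of_bound 1 ?_)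
  filter_upwards [self_mem_nhdsWithin] with q hq
  simp [hq.1, hq.2, hp]

lemma exists_forall_norm_smul_sub_le_mul_norm [FiniteDimensional ℝ E] [FiniteDimensional ℝ F]
    (B : E →L[ℝ] F →L[ℝ] G) {p : E × F} (hp₁ : ‖p.1‖ = 1) (hp₂ : ‖p.2‖ = 1) (hp : B p.1 p.2 = 0)
    (hinj : ∀ h k, B p.1 k + B h p.2 = 0 → inner ℝ p.1 h = 0 → inner ℝ p.2 k = 0 →
      h = 0 ∧ k = 0)
    (hzero : ∀ a b, ‖a‖ = 1 → ‖b‖ = 1 → B a b = 0 →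
      (a = p.1 ∨ a = -p.1) ∧ (b = p.2 ∨ b = -p.2)) :
    ∃ K : ℝ, 0 < K ∧ ∀ a b, ‖a‖ = 1 → ‖b‖ = 1 →
      ∃ σ τ : ℝ, |σ| = 1 ∧ |τ| = 1 ∧ ‖(σ • a, τ • b) - p‖ ≤ K * ‖B a b‖ := by
  have haligned : (fun q => q - p) =O[𝓟 (alignedUnitPairs p)] fun q => B q.1 q.2 := by
    refine isBigO_sub_principal_of_forall_eq (isCompact_alignedUnitPairs p)
      B.isBoundedBilinearMap.continuous.continuousOn (fun q ⟨hq, hq₁, hq₂⟩ hBq => ?_) ?_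
    · obtain ⟨h₁, h₂⟩ := hzero q.1 q.2 hq.1 hq.2 hBq
      exact Prod.ext (eq_of_eq_or_eq_neg_of_inner_nonneg h₁ hq₁)
        (eq_of_eq_or_eq_neg_of_inner_nonneg h₂ hq₂)
    · refine (isBigO_sub_of_injective_linearization B hp hinj).mono (nhdsWithin_mono _ ?_)
      exact fun q hq => ⟨hq.1.1.trans hp₁.symm, hq.1.2.trans hp₂.symm⟩
  obtain ⟨K, hK, hbound⟩ := haligned.exists_pos
  refine ⟨K, hK, fun a b ha hb => ?_⟩
  obtain ⟨σ, hσ, hσa⟩ := exists_abs_eq_one_inner_smul_nonneg p.1 a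
  obtain ⟨τ, hτ, hτb⟩ := exists_abs_eq_one_inner_smul_nonneg p.2 b
  have hmem : (σ • a, τ • b) ∈ alignedUnitPairs p :=
    ⟨⟨by simp [norm_smul, hσ, ha], by simp [norm_smul, hτ, hb]⟩, hσa, hτb⟩
  exact ⟨σ, τ, hσ, hτ, by simpa [norm_smul, hσ, hτ] using isBigOWith_principal.1 hbound _ hmem⟩

set_option maxSynthPendingDepth 3 in
lemma exists_forall_norm_smul_sub_le_mul_norm_sub {Y : Type*} [NormedAddCommGroup Y]
    [NormedSpace ℝ Y] [FiniteDimensional ℝ E] [FiniteDimensional ℝ F]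
    (R : Y →L[ℝ] E →L[ℝ] F →L[ℝ] G) {y₀ : Y} {p : E × F} (hp₁ : ‖p.1‖ = 1) (hp₂ : ‖p.2‖ = 1)
    (hp : R y₀ p.1 p.2 = 0)
    (hinj : ∀ h k, R y₀ p.1 k + R y₀ h p.2 = 0 → inner ℝ p.1 h = 0 → inner ℝ p.2 k = 0 →
      h = 0 ∧ k = 0)
    (hzero : ∀ a b, ‖a‖ = 1 → ‖b‖ = 1 → R y₀ a b = 0 →
      (a = p.1 ∨ a = -p.1) ∧ (b = p.2 ∨ b = -p.2)) :
    ∃ L : ℝ, 0 < L ∧ ∀ y a b, ‖a‖ = 1 → ‖b‖ = 1 → ‖R y a b‖ ≤ ‖R y p.1 p.2‖ →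
      ∃ σ τ : ℝ, |σ| = 1 ∧ |τ| = 1 ∧ ‖(σ • a, τ • b) - p‖ ≤ L * ‖y - y₀‖ := by
  obtain ⟨K, hK, hbound⟩ := exists_forall_norm_smul_sub_le_mul_norm (R y₀) hp₁ hp₂ hp hinj hzero
  refine ⟨K * (2 * (‖R‖ + 1)), by positivity, fun y a b ha hb hle => ?_⟩
  have hsub : ∀ u v, R (y - y₀) u v = R y u v - R y₀ u v := fun u v => by simp
  have hdata : ∀ u v, ‖u‖ = 1 → ‖v‖ = 1 → ‖R (y - y₀) u v‖ ≤ ‖R‖ * ‖y - y₀‖ := fun u v hu hv => by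
    simpa [hu, hv] using (R (y - y₀)).le_of_opNorm₂_le_of_le (R.le_opNorm _) hu.le hv.le
  have hres : ‖R y₀ a b‖ ≤ 2 * (‖R‖ + 1) * ‖y - y₀‖ := by
    calc ‖R y₀ a b‖ = ‖R y a b - R (y - y₀) a b‖ := by rw [hsub, sub_sub_cancel]
      _ ≤ ‖R y a b‖ + ‖R (y - y₀) a b‖ := norm_sub_le _ _
      _ ≤ ‖R (y - y₀) p.1 p.2‖ + ‖R (y - y₀) a b‖ := by
        gcongr
        rwa [hsub, hp, sub_zero]
      _ ≤ 2 * (‖R‖ + 1) * ‖y - y₀‖ := by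
        linarith [hdata _ _ hp₁ hp₂, hdata a b ha hb, norm_nonneg (y - y₀)]
  obtain ⟨σ, τ, hσ, hτ, hdist⟩ := hbound a b ha hb
  exact ⟨σ, τ, hσ, hτ, hdist.trans ((mul_le_mul_of_nonneg_left hres hK.le).trans_eq (by ring))⟩

end Bilinear

lemma mulVec_injective_of_rank_eq_card_s1 {m n K : Type*} [Finite m] [Fintype n] [Field K]
    {M : Matrix m n K} (hM : M.rank = Fintype.card n) : Function.Injective M.mulVec := by
  rw [Matrix.mulVec_injective_iff, linearIndependent_iff_card_eq_finrank_span, ← hM,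
    Matrix.rank_eq_finrank_span_cols]
  rfl

section Completion

open Asymptotics Filter Topology

variable {n1 n2 n3 : ℕ} (m : Fin n3 → ℕ) (I : (k : Fin n3) → Fin (m k) → Fin n1)
  (J : (k : Fin n3) → Fin (m k) → Fin n2)

/-- Positions of observed entries: the `s`-th entry of slice `k` is `⟨k, s⟩`. -/
abbrev Observation : Type := Σ k : Fin n3, Fin (m k)

/-- Pairs `s < t` of positions of observed entries in a common slice. -/
abbrev ObservationPair : Type := Σ k : Fin n3, {p : Fin (m k) × Fin (m k) // p.1 < p.2}

/-- The rank-one tensor `a ⊗ b ⊗ c`. -/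
def rankOne (a : EuclideanSpace ℝ (Fin n1)) (b : EuclideanSpace ℝ (Fin n2)) (c : Fin n3 → ℝ) :
    Fin n1 → Fin n2 → Fin n3 → ℝ :=
  fun i j k => a i * b j * c k

/-- A tensor as a vector, so that its Euclidean norm is the Hilbert–Schmidt norm. -/
def tensorVector (T : Fin n1 → Fin n2 → Fin n3 → ℝ) :
    EuclideanSpace ℝ (Fin n1 × Fin n2 × Fin n3) :=
  WithLp.toLp 2 fun p => T p.1 p.2.1 p.2.2

lemma norm_tensorVector_sub (S T : Fin n1 → Fin n2 → Fin n3 → ℝ) :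
    ‖tensorVector S - tensorVector T‖ = √(∑ i, ∑ j, ∑ k, (S i j k - T i j k) ^ 2) := by
  simp [EuclideanSpace.norm_eq, tensorVector, Fintype.sum_prod_type]

/-- The restriction of a tensor to the observed positions. -/
def observed (A : Fin n1 → Fin n2 → Fin n3 → ℝ) : EuclideanSpace ℝ (Observation m) :=
  WithLp.toLp 2 fun q => A (I q.1 q.2) (J q.1 q.2) q.1

lemma norm_observed_sub (A B : Fin n1 → Fin n2 → Fin n3 → ℝ) :
    ‖observed m I J A - observed m I J B‖ = normOmega m I J (A - B) := by
  simp [EuclideanSpace.norm_eq, observed, normOmega, Fintype.sum_sigma]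

/-- The products `a_i b_j` at the observed positions, as a bilinear map of `(a, b)`. -/
def observedProduct : EuclideanSpace ℝ (Fin n1) →L[ℝ] EuclideanSpace ℝ (Fin n2) →L[ℝ]
    EuclideanSpace ℝ (Observation m) :=
  (LinearMap.mk₂ ℝ
    (fun a b => WithLp.toLp 2 fun q : Observation m => a (I q.1 q.2) * b (J q.1 q.2))
    (fun _ _ _ => by ext; simp [add_mul]) (fun _ _ _ => by ext; simp [mul_assoc])
    (fun _ _ _ => by ext; simp [mul_add])
    (fun _ _ _ => by ext; simp [mul_left_comm])).toContinuousBilinearMap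

/-- The `2 × 2` minors `y_s x_t - y_t x_s`, `s < t`, formed slice by slice from two vectors indexed
by the observed positions. They vanish exactly if `y` and `x` are parallel on every slice. -/
def sliceMinors : EuclideanSpace ℝ (Observation m) →L[ℝ] EuclideanSpace ℝ (Observation m) →L[ℝ]
    EuclideanSpace ℝ (ObservationPair m) :=
  (LinearMap.mk₂ ℝ
    (fun y x => WithLp.toLp 2 fun q : ObservationPair m =>
      y ⟨q.1, q.2.1.1⟩ * x ⟨q.1, q.2.1.2⟩ - y ⟨q.1, q.2.1.2⟩ * x ⟨q.1, q.2.1.1⟩)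
    (fun _ _ _ => by ext; simp only [PiLp.add_apply]; ring)
    (fun _ _ _ => by ext; simp only [PiLp.smul_apply, smul_eq_mul]; ring)
    (fun _ _ _ => by ext; simp only [PiLp.add_apply]; ring)
    (fun _ _ _ => by ext; simp only [PiLp.smul_apply, smul_eq_mul]; ring)).toContinuousBilinearMap

set_option maxSynthPendingDepth 3 in
/-- The forms whose squares add up to `fA`, as a bilinear map of `(a, b)` depending linearly on the
observed entries `y` of the tensor. -/
def minorForms : EuclideanSpace ℝ (Observation m) →L[ℝ] EuclideanSpace ℝ (Fin n1) →L[ℝ]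
    EuclideanSpace ℝ (Fin n2) →L[ℝ] EuclideanSpace ℝ (ObservationPair m) :=
  (ContinuousLinearMap.compL ℝ _ _ _).flip (observedProduct m I J) ∘L
    ContinuousLinearMap.compL ℝ _ _ _ ∘L sliceMinors m

/-- The matrix `Z` of Theorem 3.1. Up to the factor `√2` on the rows indexed by `ObservationPair m`,
it is the Jacobian at `(a, b)` of the minor forms of `a ⊗ b ⊗ c` together with the halved squared
norms of the two arguments. -/
def completionJacobian (a : EuclideanSpace ℝ (Fin n1)) (b : EuclideanSpace ℝ (Fin n2))
    (c : Fin n3 → ℝ) : Matrix (ObservationPair m ⊕ Fin 2) (Fin n1 ⊕ Fin n2) ℝ :=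
  Matrix.of (Sum.elim
    (fun q x => √2 * c q.1 *
      (Sum.elim
        (fun i => a (I q.1 q.2.1.1) * b (J q.1 q.2.1.1) * b (J q.1 q.2.1.2) *
              (if i = I q.1 q.2.1.2 then 1 else 0)
          - a (I q.1 q.2.1.2) * b (J q.1 q.2.1.2) * b (J q.1 q.2.1.1) *
              (if i = I q.1 q.2.1.1 then 1 else 0))
        (fun j => a (I q.1 q.2.1.1) * b (J q.1 q.2.1.1) * a (I q.1 q.2.1.2) *
              (if j = J q.1 q.2.1.2 then 1 else 0)
          - a (I q.1 q.2.1.2) * b (J q.1 q.2.1.2) * a (I q.1 q.2.1.1) *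
              (if j = J q.1 q.2.1.1 then 1 else 0)) x))
    ![Sum.elim (fun i => a i) (fun _ => 0), Sum.elim (fun _ => 0) (fun j => b j)])

/-- The least-squares coefficient of `x` against `y` on each slice; it is `0` on a slice where `x`
vanishes. -/
def sliceCoeff (y x : EuclideanSpace ℝ (Observation m)) (k : Fin n3) : ℝ :=
  (∑ s, y ⟨k, s⟩ * x ⟨k, s⟩) / ∑ s, x ⟨k, s⟩ ^ 2

/-- The rank-one tensor `a ⊗ b ⊗ c` with `c` fitted to the observed entries `y` by least squares. -/
def rankOneFit (y : EuclideanSpace ℝ (Observation m)) (a : EuclideanSpace ℝ (Fin n1))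
    (b : EuclideanSpace ℝ (Fin n2)) : EuclideanSpace ℝ (Fin n1 × Fin n2 × Fin n3) :=
  tensorVector (rankOne a b (sliceCoeff m y (observedProduct m I J a b)))

variable {m I J} {a : EuclideanSpace ℝ (Fin n1)} {b : EuclideanSpace ℝ (Fin n2)} {c : Fin n3 → ℝ}

lemma observedProduct_apply (q : Observation m) :
    observedProduct m I J a b q = a (I q.1 q.2) * b (J q.1 q.2) := rfl

lemma minorForms_observed_apply (A : Fin n1 → Fin n2 → Fin n3 → ℝ) (q : ObservationPair m) :
    minorForms m I J (observed m I J A) a b q =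
      A (I q.1 q.2.1.1) (J q.1 q.2.1.1) q.1 * a (I q.1 q.2.1.2) * b (J q.1 q.2.1.2) -
        A (I q.1 q.2.1.2) (J q.1 q.2.1.2) q.1 * a (I q.1 q.2.1.1) * b (J q.1 q.2.1.1) := by
  rw [mul_assoc, mul_assoc]
  rfl

lemma fA_eq_norm_minorForms_sq (A : Fin n1 → Fin n2 → Fin n3 → ℝ) :
    fA m I J A (fun i => a i) (fun j => b j) = ‖minorForms m I J (observed m I J A) a b‖ ^ 2 := by
  simp only [fA, EuclideanSpace.norm_sq_eq, Real.norm_eq_abs, sq_abs, minorForms_observed_apply,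
    Fintype.sum_sigma]
  refine sum_congr rfl fun k _ => ?_
  rw [← Fintype.sum_prod_type', ← sum_filter]
  exact sum_subtype _ (by simp) _

lemma fA_eq_zero_iff {A : Fin n1 → Fin n2 → Fin n3 → ℝ} :
    fA m I J A (fun i => a i) (fun j => b j) = 0 ↔ ∀ k s t, s < t →
      A (I k s) (J k s) k * a (I k t) * b (J k t) -
        A (I k t) (J k t) k * a (I k s) * b (J k s) = 0 := by
  rw [fA_eq_norm_minorForms_sq, sq_eq_zero_iff, norm_eq_zero, PiLp.ext_iff]
  simp only [minorForms_observed_apply]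
  exact ⟨fun h k s t hst => h ⟨k, (s, t), hst⟩, fun h q => h q.1 _ _ q.2.2⟩

lemma minorForms_observed_rankOne : minorForms m I J (observed m I J (rankOne a b c)) a b = 0 := by
  ext q
  simp only [minorForms_observed_apply, rankOne, PiLp.zero_apply]
  ring

lemma completionJacobian_mulVec_inl (h : EuclideanSpace ℝ (Fin n1)) (k : EuclideanSpace ℝ (Fin n2))
    (q : ObservationPair m) :
    (completionJacobian m I J a b c *ᵥ Sum.elim (fun i => h i) (fun j => k j)) (Sum.inl q) =
      √2 * (minorForms m I J (observed m I J (rankOne a b c)) a k +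
        minorForms m I J (observed m I J (rankOne a b c)) h b) q := by
  simp only [PiLp.add_apply, minorForms_observed_apply, rankOne, completionJacobian, Matrix.mulVec,
    dotProduct, of_apply, Sum.elim_inl, Sum.elim_inr, Fintype.sum_sum_type]
  simp only [mul_assoc, ← mul_sum, sub_mul, sum_sub_distrib, ite_mul, one_mul, zero_mul,
    sum_ite_eq', mem_univ, if_true]
  ring

lemma eq_zero_of_rank_completionJacobian (hrank : (completionJacobian m I J a b c).rank = n1 + n2)
    {h : EuclideanSpace ℝ (Fin n1)} {k : EuclideanSpace ℝ (Fin n2)}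
    (hforms : minorForms m I J (observed m I J (rankOne a b c)) a k +
      minorForms m I J (observed m I J (rankOne a b c)) h b = 0)
    (hh : inner ℝ a h = 0) (hk : inner ℝ b k = 0) : h = 0 ∧ k = 0 := by
  have hker : completionJacobian m I J a b c *ᵥ Sum.elim (fun i => h i) (fun j => k j) =
      completionJacobian m I J a b c *ᵥ 0 := by
    rw [Matrix.mulVec_zero]
    ext (q | r)
    · simp [completionJacobian_mulVec_inl, hforms]
    · fin_cases r
      · simpa [completionJacobian, Matrix.mulVec, dotProduct, PiLp.inner_apply, mul_comm] using hh
      · simpa [completionJacobian, Matrix.mulVec, dotProduct, PiLp.inner_apply, mul_comm] using hk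
  have hzero := mulVec_injective_of_rank_eq_card_s1 (by simpa using hrank) hker
  exact ⟨PiLp.ext fun i => congr_fun hzero (Sum.inl i),
    PiLp.ext fun j => congr_fun hzero (Sum.inr j)⟩

lemma sliceCoeff_smul {r : ℝ} (hr : r ≠ 0) (y x : EuclideanSpace ℝ (Observation m)) (k : Fin n3) :
    sliceCoeff m y (r • x) k = r⁻¹ * sliceCoeff m y x k := by
  simp only [sliceCoeff, PiLp.smul_apply, smul_eq_mul, mul_pow, mul_left_comm _ r, ← mul_sum]
  field_simp

lemma rankOneFit_smul_smul {σ τ : ℝ} (hσ : σ ≠ 0) (hτ : τ ≠ 0)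
    (y : EuclideanSpace ℝ (Observation m)) :
    rankOneFit m I J y (σ • a) (τ • b) = rankOneFit m I J y a b := by
  ext p
  simp only [rankOneFit, tensorVector, rankOne, map_smul, _root_.smul_apply,
    sliceCoeff_smul hσ, sliceCoeff_smul hτ, PiLp.smul_apply, smul_eq_mul]
  field_simp

lemma nonsingular_smul_smul_iff {σ τ : ℝ} (hσ : σ ≠ 0) (hτ : τ ≠ 0) :
    Nonsingular m I J (fun i => (σ • a) i) (fun j => (τ • b) j) ↔
      Nonsingular m I J (fun i => a i) (fun j => b j) := by
  simp [_root_.Nonsingular, hσ, hτ]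

lemma eventually_nonsingular (hns : Nonsingular m I J (fun i => a i) (fun j => b j)) :
    ∀ᶠ q : EuclideanSpace ℝ (Fin n1) × EuclideanSpace ℝ (Fin n2) in 𝓝 (a, b),
      Nonsingular m I J (fun i => q.1 i) (fun j => q.2 j) := by
  refine eventually_all.2 fun k => ?_
  obtain ⟨hk, s, hs⟩ := hns k
  have hcont : Continuous fun q : EuclideanSpace ℝ (Fin n1) × EuclideanSpace ℝ (Fin n2) =>
      q.1 (I k s) * q.2 (J k s) := by fun_prop
  filter_upwards [hcont.continuousAt.eventually_ne hs] with q hq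
  exact ⟨hk, s, hq⟩

lemma sum_observedProduct_sq_ne_zero (hns : Nonsingular m I J (fun i => a i) (fun j => b j))
    (k : Fin n3) : ∑ s, observedProduct m I J a b ⟨k, s⟩ ^ 2 ≠ 0 := by
  obtain ⟨-, s, hs⟩ := hns k
  refine (sum_pos' (fun _ _ => sq_nonneg _) ⟨s, mem_univ s, ?_⟩).ne'
  exact sq_pos_iff.2 hs

lemma rankOneFit_observed_rankOne (hns : Nonsingular m I J (fun i => a i) (fun j => b j)) :
    rankOneFit m I J (observed m I J (rankOne a b c)) a b = tensorVector (rankOne a b c) := by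
  have hcoeff : sliceCoeff m (observed m I J (rankOne a b c)) (observedProduct m I J a b) = c := by
    ext k
    rw [sliceCoeff, div_eq_iff (sum_observedProduct_sq_ne_zero hns k), mul_sum]
    refine sum_congr rfl fun s _ => ?_
    simp only [observed, rankOne, observedProduct_apply]
    ring
  rw [rankOneFit, hcoeff]

lemma differentiableAt_rankOneFit (hns : Nonsingular m I J (fun i => a i) (fun j => b j))
    (y : EuclideanSpace ℝ (Observation m)) :
    DifferentiableAt ℝ (fun z : EuclideanSpace ℝ (Observation m) ×
      EuclideanSpace ℝ (Fin n1) × EuclideanSpace ℝ (Fin n2) =>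
        rankOneFit m I J z.1 z.2.1 z.2.2) (y, a, b) := by
  have hne := sum_observedProduct_sq_ne_zero hns
  simp only [observedProduct_apply] at hne
  refine differentiableAt_piLp 2 |>.2 fun p => ?_
  simp only [rankOneFit, tensorVector, rankOne, sliceCoeff, observedProduct_apply]
  fun_prop (disch := exact hne _)

lemma eventually_nonsingular_and_norm_rankOneFit_sub_le
    (hns : Nonsingular m I J (fun i => a i) (fun j => b j)) (c : Fin n3 → ℝ) :
    ∃ C : ℝ, 0 < C ∧ ∀ᶠ z : EuclideanSpace ℝ (Observation m) ×
        EuclideanSpace ℝ (Fin n1) × EuclideanSpace ℝ (Fin n2) in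
        𝓝 (observed m I J (rankOne a b c), a, b),
      Nonsingular m I J (fun i => z.2.1 i) (fun j => z.2.2 j) ∧
      ‖rankOneFit m I J z.1 z.2.1 z.2.2 - tensorVector (rankOne a b c)‖ ≤
        C * ‖z - (observed m I J (rankOne a b c), a, b)‖ := by
  obtain ⟨C, hC, hfit⟩ := (differentiableAt_rankOneFit hns _).isBigO_sub.exists_pos
  have hns' := (continuous_snd.tendsto (observed m I J (rankOne a b c), a, b)).eventually
    (eventually_nonsingular hns)
  rw [rankOneFit_observed_rankOne hns] at hfit
  exact ⟨C, hC, hns'.and hfit.bound⟩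

lemma exists_forall_norm_rankOneFit_sub_le {ahat : EuclideanSpace ℝ (Fin n1)}
    {bhat : EuclideanSpace ℝ (Fin n2)} {chat : Fin n3 → ℝ}
    (hna : ‖ahat‖ = 1) (hnb : ‖bhat‖ = 1)
    (hrank : (completionJacobian m I J ahat bhat chat).rank = n1 + n2)
    (hzeros : ∀ (a : EuclideanSpace ℝ (Fin n1)) (b : EuclideanSpace ℝ (Fin n2)),
      ‖a‖ = 1 → ‖b‖ = 1 → fA m I J (rankOne ahat bhat chat) (fun i => a i) (fun j => b j) = 0 →
      (a = ahat ∨ a = -ahat) ∧ (b = bhat ∨ b = -bhat))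
    (hns : Nonsingular m I J (fun i => ahat i) (fun j => bhat j)) :
    ∃ C : ℝ, 0 < C ∧ ∃ ε : ℝ, 0 < ε ∧ ∀ A : Fin n1 → Fin n2 → Fin n3 → ℝ,
      normOmega m I J (A - rankOne ahat bhat chat) ≤ ε →
      ∀ (a : EuclideanSpace ℝ (Fin n1)) (b : EuclideanSpace ℝ (Fin n2)), ‖a‖ = 1 → ‖b‖ = 1 →
        fA m I J A (fun i => a i) (fun j => b j) ≤
          fA m I J A (fun i => ahat i) (fun j => bhat j) →
        Nonsingular m I J (fun i => a i) (fun j => b j) ∧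
        ‖rankOneFit m I J (observed m I J A) a b - tensorVector (rankOne ahat bhat chat)‖ ≤
          C * normOmega m I J (A - rankOne ahat bhat chat) := by
  set y₀ := observed m I J (rankOne ahat bhat chat)
  obtain ⟨L, hL, hfactors⟩ := exists_forall_norm_smul_sub_le_mul_norm_sub (minorForms m I J)
    (y₀ := y₀) (p := (ahat, bhat)) hna hnb minorForms_observed_rankOne
    (fun _ _ => eq_zero_of_rank_completionJacobian hrank)
    fun a b ha hb hab => hzeros a b ha hb (by simp [fA_eq_norm_minorForms_sq, y₀, hab])
  obtain ⟨C, hC, hfit⟩ := eventually_nonsingular_and_norm_rankOneFit_sub_le hns chat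
  obtain ⟨δ, hδ, hball⟩ := Metric.eventually_nhds_iff.1 hfit
  refine ⟨C * (L + 1), by positivity, δ / (2 * (L + 1)), by positivity, ?_⟩
  intro A hA a b ha hb hle
  simp only [fA_eq_norm_minorForms_sq, sq_le_sq₀ (norm_nonneg _) (norm_nonneg _)] at hle
  rw [← norm_observed_sub] at hA ⊢
  obtain ⟨σ, τ, hσ, hτ, hστ⟩ := hfactors (observed m I J A) a b ha hb hle
  have hσ₀ : σ ≠ 0 := fun h => by simp [h] at hσ
  have hτ₀ : τ ≠ 0 := fun h => by simp [h] at hτ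
  have hdist : ‖(observed m I J A, σ • a, τ • b) - (y₀, ahat, bhat)‖ ≤
      (L + 1) * ‖observed m I J A - y₀‖ := by
    refine norm_prod_le_iff.2 ⟨?_, hστ.trans ?_⟩
    · exact le_mul_of_one_le_left (norm_nonneg _) (by linarith)
    · exact mul_le_mul_of_nonneg_right (by linarith) (norm_nonneg _)
  have hclose : (L + 1) * ‖observed m I J A - y₀‖ < δ := by
    rw [le_div_iff₀ (by positivity)] at hA
    linarith
  obtain ⟨hns', hfit'⟩ := hball (dist_eq_norm _ (y₀, ahat, bhat) ▸ hdist.trans_lt hclose)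
  refine ⟨(nonsingular_smul_smul_iff hσ₀ hτ₀).1 hns', ?_⟩
  rw [rankOneFit_smul_smul hσ₀ hτ₀] at hfit'
  exact hfit'.trans ((mul_le_mul_of_nonneg_left hdist hC.le).trans_eq (mul_assoc _ _ _).symm)

theorem stmt1_general {n1 n2 n3 : ℕ} (m : Fin n3 → ℕ)
    (I : (k : Fin n3) → Fin (m k) → Fin n1) (J : (k : Fin n3) → Fin (m k) → Fin n2)
    (ahat : EuclideanSpace ℝ (Fin n1)) (bhat : EuclideanSpace ℝ (Fin n2)) (chat : Fin n3 → ℝ)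
    (hna : ‖ahat‖ = 1) (hnb : ‖bhat‖ = 1)
    (hrank : (completionJacobian m I J ahat bhat chat).rank = n1 + n2)
    (hzeros : ∀ (a : EuclideanSpace ℝ (Fin n1)) (b : EuclideanSpace ℝ (Fin n2)),
      ‖a‖ = 1 → ‖b‖ = 1 →
      (∀ k s t, s < t →
        rankOne ahat bhat chat (I k s) (J k s) k * a (I k t) * b (J k t)
          - rankOne ahat bhat chat (I k t) (J k t) k * a (I k s) * b (J k s) = 0) →
      ((a = ahat ∧ b = bhat) ∨ (a = ahat ∧ b = -bhat) ∨
       (a = -ahat ∧ b = bhat) ∨ (a = -ahat ∧ b = -bhat)))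
    (hns : Nonsingular m I J (fun i => ahat i) (fun j => bhat j)) :
    ∃ C : ℝ, 0 < C ∧ ∃ ε : ℝ, 0 < ε ∧ ∀ A : Fin n1 → Fin n2 → Fin n3 → ℝ,
      normOmega m I J (A - rankOne ahat bhat chat) ≤ ε →
      ∀ (a : EuclideanSpace ℝ (Fin n1)) (b : EuclideanSpace ℝ (Fin n2)), ‖a‖ = 1 → ‖b‖ = 1 →
        fA m I J A (fun i => a i) (fun j => b j) ≤
          fA m I J A (fun i => ahat i) (fun j => bhat j) →
        Nonsingular m I J (fun i => a i) (fun j => b j) ∧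
        ∀ c : Fin n3 → ℝ,
          (∀ k, c k = (∑ s, A (I k s) (J k s) k * a (I k s) * b (J k s)) /
            ∑ s, (a (I k s) * b (J k s)) ^ 2) →
          √(∑ i, ∑ j, ∑ k, (a i * b j * c k - ahat i * bhat j * chat k) ^ 2) ≤
            C * normOmega m I J (A - rankOne ahat bhat chat) := by
  obtain ⟨C, hC, ε, hε, hstable⟩ := exists_forall_norm_rankOneFit_sub_le hna hnb hrank
    (fun a b ha hb hab => by have := hzeros a b ha hb (fA_eq_zero_iff.1 hab); tauto) hns
  refine ⟨C, hC, ε, hε, fun A hA a b ha hb hle => ?_⟩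
  obtain ⟨hns', hfit⟩ := hstable A hA a b ha hb hle
  refine ⟨hns', fun c hc => ?_⟩
  obtain rfl : c = sliceCoeff m (observed m I J A) (observedProduct m I J a b) := by
    ext k
    simp only [hc, sliceCoeff, observed, observedProduct_apply, mul_assoc]
  rwa [rankOneFit, norm_tensorVector_sub] at hfit

end Completion

theorem stmt1 {n1 n2 n3 : ℕ} (hn1 : 0 < n1) (hn2 : 0 < n2) (hn3 : 0 < n3)
    (m : Fin n3 → ℕ)
    (I : (k : Fin n3) → Fin (m k) → Fin n1) (J : (k : Fin n3) → Fin (m k) → Fin n2)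
    (hinj : ∀ k : Fin n3, Function.Injective (fun s => (I k s, J k s)))
    (ahat : EuclideanSpace ℝ (Fin n1)) (bhat : EuclideanSpace ℝ (Fin n2))
    (chat : Fin n3 → ℝ)
    (hna : ‖ahat‖ = 1) (hnb : ‖bhat‖ = 1)
    (Ahat : Fin n1 → Fin n2 → Fin n3 → ℝ)
    (hAhat : ∀ i j k, Ahat i j k = ahat i * bhat j * chat k)
    (Z : Matrix ((Σ k : Fin n3, {p : Fin (m k) × Fin (m k) // p.1 < p.2}) ⊕ Fin 2)
          (Fin n1 ⊕ Fin n2) ℝ)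
    (hZ : Z = Matrix.of (Sum.elim
      (fun q : Σ k : Fin n3, {p : Fin (m k) × Fin (m k) // p.1 < p.2} =>
        fun x : Fin n1 ⊕ Fin n2 => Real.sqrt 2 * chat q.1 *
          (Sum.elim
            (fun i => ahat (I q.1 q.2.1.1) * bhat (J q.1 q.2.1.1) * bhat (J q.1 q.2.1.2) *
                  (if i = I q.1 q.2.1.2 then 1 else 0)
              - ahat (I q.1 q.2.1.2) * bhat (J q.1 q.2.1.2) * bhat (J q.1 q.2.1.1) *
                  (if i = I q.1 q.2.1.1 then 1 else 0))
            (fun j => ahat (I q.1 q.2.1.1) * bhat (J q.1 q.2.1.1) * ahat (I q.1 q.2.1.2) *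
                  (if j = J q.1 q.2.1.2 then 1 else 0)
              - ahat (I q.1 q.2.1.2) * bhat (J q.1 q.2.1.2) * ahat (I q.1 q.2.1.1) *
                  (if j = J q.1 q.2.1.1 then 1 else 0)) x))
      ![Sum.elim (fun i => ahat i) (fun _ => 0),
        Sum.elim (fun _ => 0) (fun j => bhat j)]))
    (hrank : Z.rank = n1 + n2)
    (hzeros : ∀ (a : EuclideanSpace ℝ (Fin n1)) (b : EuclideanSpace ℝ (Fin n2)),
      ‖a‖ = 1 → ‖b‖ = 1 →
      (∀ (k : Fin n3) (s t : Fin (m k)), s < t →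
        Ahat (I k s) (J k s) k * a (I k t) * b (J k t)
          - Ahat (I k t) (J k t) k * a (I k s) * b (J k s) = 0) →
      ((a = ahat ∧ b = bhat) ∨ (a = ahat ∧ b = -bhat) ∨
       (a = -ahat ∧ b = bhat) ∨ (a = -ahat ∧ b = -bhat)))
    (hns : Nonsingular m I J (fun i => ahat i) (fun j => bhat j))
    (hchat : ∀ k : Fin n3, chat k ≠ 0) :
    ∃ C : ℝ, 0 < C ∧ ∃ ε : ℝ, 0 < ε ∧
      ∀ A : Fin n1 → Fin n2 → Fin n3 → ℝ,
        normOmega m I J (A - Ahat) ≤ ε →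
        ∀ (astar : EuclideanSpace ℝ (Fin n1)) (bstar : EuclideanSpace ℝ (Fin n2)),
          ‖astar‖ = 1 → ‖bstar‖ = 1 →
          (∀ (a : EuclideanSpace ℝ (Fin n1)) (b : EuclideanSpace ℝ (Fin n2)),
            ‖a‖ = 1 → ‖b‖ = 1 →
            fA m I J A (fun i => astar i) (fun j => bstar j)
              ≤ fA m I J A (fun i => a i) (fun j => b j)) →
          Nonsingular m I J (fun i => astar i) (fun j => bstar j) ∧
          ∀ cstar : Fin n3 → ℝ,
            (∀ k : Fin n3, cstar k =
              (∑ s : Fin (m k), A (I k s) (J k s) k * astar (I k s) * bstar (J k s)) /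
              (∑ s : Fin (m k), (astar (I k s) * bstar (J k s)) ^ 2)) →
            Real.sqrt (∑ i : Fin n1, ∑ j : Fin n2, ∑ k : Fin n3,
                (astar i * bstar j * cstar k - ahat i * bhat j * chat k) ^ 2)
              ≤ C * normOmega m I J (A - Ahat) := by
  obtain rfl : Ahat = rankOne ahat bhat chat := funext₃ hAhat
  obtain ⟨C, hC, ε, hε, hstable⟩ :=
    stmt1_general m I J ahat bhat chat hna hnb (by rwa [hZ] at hrank) hzeros hns
  exact ⟨C, hC, ε, hε, fun A hA a b ha hb hmin =>
    hstable A hA a b ha hb (hmin ahat bhat hna hnb)⟩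
end
end
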